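/- Any two W-configurations are related by an orthogonal transformation: if X and X' are W-configurations in ℝ^10, then there exists a linear isometric equivalence f of EuclideanSpace ℝ (Fin 10) onto itself with f(X) = X'. (This is the concrete form of the main theorem: an association scheme with the parameters of the scheme W on the blocks of the Witt 4-(11,5,1) design is determined up to isomorphism, since its spherical representation into the first eigenspace is unique up to orthogonal transformation.) -/

import Mathlib

open RealInnerProductSpace

noncomputable section

/-- The three admissible inner product values (angles). -/
def α1 : ℝ := 4/15
def α2 : ℝ := -1/10
def α3 : ℝ := -7/15

/-- The three admissible angles, indexed. -/
def wAngle : Fin 3 → ℝ := ![α1, α2, α3]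

/-- The intersection numbers `p^k_{ij}` of the association scheme `W` of the
Witt 4-(11,5,1) design (index `k` first, then row `i`, column `j`). -/
def wP : Fin 3 → Fin 3 → Fin 3 → ℕ :=
  ![![![15,10,4], ![10,4,6], ![4,6,5]],
    ![![15,6,9], ![6,10,3], ![9,3,3]],
    ![![8,12,10], ![12,4,4], ![10,4,0]]]

/-- A `W`-configuration: 66 unit vectors in ℝ^10 whose pairwise inner products
lie in `{α1, α2, α3}`, realizing the valencies 30, 20, 15 and the intersection
numbers `p^k_{ij}` of the association scheme `W` of the Witt 4-(11,5,1)
design. -/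
def IsWConfig (X : Set (EuclideanSpace ℝ (Fin 10))) : Prop :=
  X.ncard = 66 ∧ (∀ u ∈ X, ‖u‖ = 1) ∧
  (∀ u ∈ X, ∀ v ∈ X, u ≠ v → ⟪u, v⟫ ∈ ({α1, α2, α3} : Set ℝ)) ∧
  (∀ u ∈ X, {v | v ∈ X ∧ ⟪u, v⟫ = α1}.ncard = 30 ∧
            {v | v ∈ X ∧ ⟪u, v⟫ = α2}.ncard = 20 ∧
            {v | v ∈ X ∧ ⟪u, v⟫ = α3}.ncard = 15) ∧
  (∀ u ∈ X, ∀ v ∈ X, u ≠ v → ∀ k i j : Fin 3, ⟪u, v⟫ = wAngle k →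
    {w | w ∈ X ∧ ⟪u, w⟫ = wAngle i ∧ ⟪w, v⟫ = wAngle j}.ncard = wP k i j)

/-!
The relation `α2` of `W` has the parameters of the triangular graph `T(12)`. The neighbourhood of a
vertex in such a graph has a triangle-free complement of large minimum degree, so it splits into two
cliques by the Andrásfai–Erdős–Sós theorem, and the graph contains an `11`-clique. Eleven unit
vectors in `ℝ^10` with pairwise inner products `-1/10` form a regular simplex, which is unique up to
isometry, and every other vector is known through its inner products with the simplex: a word of
length `11` with two digits `1` and three digits `2`. Any two coordinates carry the ones of exactly
one word, so there are `55` words.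

The supports of the twos in the ten words with a one at a fixed coordinate are the neighbourhoods of
a Moore graph of degree `3`, that is, of the Petersen graph. A coordinate permutation therefore
brings these ten words into the standard position given by the Paley biplane. Every remaining word
then has two candidates, which are interchanged by an automorphism of the Petersen graph that does
not come from the biplane. Choosing the candidate for a single word determines all of them.
-/

open Finset

section StronglyRegular

variable {V : Type*} [Fintype V] [DecidableEq V] {G : SimpleGraph V} [DecidableRel G.Adj]
  {n k l m : ℕ} {a b : V}

theorem card_neighborFinset_inter_of_adj (hG : G.IsSRGWith n k l m) (h : G.Adj a b) :
    #(G.neighborFinset a ∩ G.neighborFinset b) = l := by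
  rw [← hG.of_adj a b h, ← Set.toFinset_card]
  congr 1
  ext x
  simp [SimpleGraph.mem_commonNeighbors]

theorem card_neighborFinset_inter_of_not_adj (hG : G.IsSRGWith n k l m) (hab : a ≠ b)
    (h : ¬ G.Adj a b) : #(G.neighborFinset a ∩ G.neighborFinset b) = m := by
  rw [← hG.of_not_adj hab h, ← Set.toFinset_card]
  congr 1
  ext x
  simp [SimpleGraph.mem_commonNeighbors]

end StronglyRegular

theorem card_add_card_add_card_le {α : Type*} [DecidableEq α] (s t u : Finset α) :
    #s + #t + #u ≤ #(s ∪ t ∪ u) + #(s ∩ t) + #(s ∩ u) + #(t ∩ u) := by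
  have h₁ := card_union_add_card_inter s t
  have h₂ := card_union_add_card_inter (s ∪ t) u
  have h₃ : #((s ∪ t) ∩ u) ≤ #(s ∩ u) + #(t ∩ u) := by
    rw [union_inter_distrib_right]
    exact card_union_le _ _
  omega

section Clique

variable {V : Type*} [Fintype V] {G : SimpleGraph V} [DecidableRel G.Adj] {n k m : ℕ}

open Classical in
theorem exists_adj_of_three_neighbors (hG : G.IsSRGWith n (2 * k) k m) (hm : 3 * m < k + 6)
    {u a b c : V} (ha : G.Adj u a) (hb : G.Adj u b) (hc : G.Adj u c)
    (hab : a ≠ b) (hac : a ≠ c) (hbc : b ≠ c) : G.Adj a b ∨ G.Adj a c ∨ G.Adj b c := by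
  by_contra! ⟨nab, nac, nbc⟩
  let N (x : V) : Finset V := G.neighborFinset u ∩ G.neighborFinset x
  have card_N {x : V} (hx : G.Adj u x) : #(N x) = k := card_neighborFinset_inter_of_adj hG hx
  have card_N_inter {x y : V} (hx : G.Adj u x) (hy : G.Adj u y) (hxy : x ≠ y)
      (nxy : ¬ G.Adj x y) : #(N x ∩ N y) < m := by
    rw [← card_neighborFinset_inter_of_not_adj hG hxy nxy]
    refine card_lt_card (ssubset_iff.mpr ⟨u, by simp [N], ?_⟩)
    grind [SimpleGraph.mem_neighborFinset, SimpleGraph.adj_comm]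
  have card_union : #(N a ∪ N b ∪ N c) + 3 ≤ 2 * k := by
    rw [← hG.regular.degree_eq u, ← G.card_neighborFinset_eq_degree,
      ← card_eq_three.mpr ⟨a, b, c, hab, hac, hbc, rfl⟩, ← card_union_of_disjoint]
    · exact card_le_card (by grind [SimpleGraph.mem_neighborFinset])
    · rw [disjoint_left]
      grind [SimpleGraph.mem_neighborFinset, SimpleGraph.adj_comm, SimpleGraph.irrefl]
  have := card_add_card_add_card_le (N a) (N b) (N c)
  have := card_N_inter ha hb hab nab
  have := card_N_inter ha hc hac nac
  have := card_N_inter hb hc hbc nbc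
  rw [card_N ha, card_N hb, card_N hc] at *
  omega

open Classical in
/-- The complement of the graph induced on the neighbours of `u` is triangle-free of large minimum
degree, hence bipartite by the Andrásfai–Erdős–Sós theorem. -/
theorem colorable_compl_induce_neighborSet (hG : G.IsSRGWith n (2 * k) k m) (hm : 3 * m < k + 6)
    (hk : 5 < k) (u : V) : (G.induce (G.neighborSet u))ᶜ.Colorable 2 := by
  have : Nonempty (G.neighborSet u) := by
    rw [← Fintype.card_pos_iff, SimpleGraph.card_neighborSet_eq_degree, hG.regular.degree_eq]
    omega
  apply SimpleGraph.colorable_of_cliqueFree_lt_minDegree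
  · intro s hs
    obtain ⟨a, b, c, hab, hac, hbc, -⟩ := SimpleGraph.is3Clique_iff.mp hs
    simp only [SimpleGraph.compl_adj, SimpleGraph.comap_adj, Function.Embedding.subtype_apply]
      at hab hac hbc
    have := exists_adj_of_three_neighbors hG hm a.2 b.2 c.2 (Subtype.coe_ne_coe.mpr hab.1)
      (Subtype.coe_ne_coe.mpr hac.1) (Subtype.coe_ne_coe.mpr hbc.1)
    tauto
  · have hdeg (a : G.neighborSet u) : (G.induce (G.neighborSet u))ᶜ.degree a = k - 1 := by
      have hcard : #((G.induce (G.neighborSet u)).neighborFinset a) = k := by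
        rw [← card_neighborFinset_inter_of_adj hG a.2, ← card_map (.subtype _)]
        congr 1
        ext x
        simp [and_comm]
      rw [SimpleGraph.degree_compl, ← SimpleGraph.card_neighborFinset_eq_degree, hcard,
        SimpleGraph.card_neighborSet_eq_degree, hG.regular.degree_eq]
      omega
    rw [SimpleGraph.card_neighborSet_eq_degree, hG.regular.degree_eq]
    exact lt_of_lt_of_le (by omega) (SimpleGraph.le_minDegree_of_forall_le_degree _ (k - 1)
      fun a => (hdeg a).ge)

theorem exists_isNClique_succ [Nonempty V] (hG : G.IsSRGWith n (2 * k) k m) (hm : 3 * m < k + 6)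
    (hk : 5 < k) : ∃ s, G.IsNClique (k + 1) s := by
  classical
  obtain ⟨u⟩ := ‹Nonempty V›
  obtain ⟨f⟩ := colorable_compl_induce_neighborSet hG hm hk u
  obtain ⟨i, hi⟩ := Fintype.exists_le_card_fiber_of_mul_le_card (n := k) f (by
    rw [Fintype.card_fin, SimpleGraph.card_neighborSet_eq_degree, hG.regular.degree_eq])
  obtain ⟨t, hti, ht⟩ := exists_subset_card_eq hi
  have hclique : (G.induce (G.neighborSet u)).IsNClique k t :=
    ⟨(SimpleGraph.isIndepSet_compl _).mp <|
      (f.isIndepSet_colorClass i).mono fun x hx => (mem_filter.mp (hti hx)).2, ht⟩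
  refine ⟨_, ((SimpleGraph.isNClique_induce_iff _ _ _).mp hclique).insert (a := u) ?_⟩
  simpa using fun x hx _ => hx

end Clique

section TriangleFree

variable {V : Type*} [Fintype V] {G : SimpleGraph V} [DecidableRel G.Adj] {n k : ℕ} {a b c d : V}

theorem not_adj_of_common_neighbor {m : ℕ} (hG : G.IsSRGWith n k 0 m) (hac : G.Adj a c)
    (hbc : G.Adj b c) : ¬ G.Adj a b := fun hab =>
  (Fintype.card_eq_zero_iff.mp (hG.of_adj a b hab)).elim ⟨c, hac, hbc⟩

theorem exists_common_neighbor {l : ℕ} (hG : G.IsSRGWith n k l 1) (hne : a ≠ b)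
    (hab : ¬ G.Adj a b) : ∃ c, G.Adj a c ∧ G.Adj b c := by
  obtain ⟨c, -⟩ := Fintype.card_eq_one_iff.mp (hG.of_not_adj hne hab)
  exact ⟨c, c.2⟩

theorem common_neighbor_unique (hG : G.IsSRGWith n k 0 1) (hab : a ≠ b) (hac : G.Adj a c)
    (hbc : G.Adj b c) (had : G.Adj a d) (hbd : G.Adj b d) : c = d := by
  obtain ⟨e, he⟩ := Fintype.card_eq_one_iff.mp
    (hG.of_not_adj hab (not_adj_of_common_neighbor hG hac hbc))
  exact congrArg Subtype.val ((he ⟨c, hac, hbc⟩).trans (he ⟨d, had, hbd⟩).symm)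

theorem exists_adj_ne_ne (hG : G.IsRegularOfDegree k) (hk : 2 < k) (a b c : V) :
    ∃ d, G.Adj a d ∧ d ≠ b ∧ d ≠ c := by
  classical
  obtain ⟨d, hd, hbc⟩ := exists_mem_notMem_of_card_lt_card (s := {b, c}) (t := G.neighborFinset a)
    (card_le_two.trans_lt (by rwa [G.card_neighborFinset_eq_degree, hG.degree_eq]))
  exact ⟨d, (G.mem_neighborFinset a d).mp hd, by simpa using hbc⟩

end TriangleFree

section Petersen

/-- The Petersen graph as the generalized Petersen graph `GP(5, 2)`: the left summand carries the
outer pentagon, the right one the inner pentagram. -/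
def petersenGraph : SimpleGraph (ZMod 5 ⊕ ZMod 5) where
  Adj
    | .inl i, .inl j => j = i + 1 ∨ i = j + 1
    | .inr i, .inr j => j = i + 2 ∨ i = j + 2
    | .inl i, .inr j => i = j
    | .inr i, .inl j => i = j
  symm := ⟨by rintro (i | i) (j | j) <;> grind⟩
  loopless := ⟨by rintro (i | i) <;> revert i <;> decide⟩

instance : DecidableRel petersenGraph.Adj
  | .inl i, .inl j => inferInstanceAs (Decidable (j = i + 1 ∨ i = j + 1))
  | .inr i, .inr j => inferInstanceAs (Decidable (j = i + 2 ∨ i = j + 2))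
  | .inl i, .inr j => inferInstanceAs (Decidable (i = j))
  | .inr i, .inl j => inferInstanceAs (Decidable (i = j))

theorem petersenGraph_exists_common_neighbor :
    ∀ a b, a ≠ b → ¬ petersenGraph.Adj a b →
      ∃ c, petersenGraph.Adj a c ∧ petersenGraph.Adj b c := by
  decide

theorem zmod_five_cases :
    ∀ i j : ZMod 5, j = i ∨ j = i + 1 ∨ j = i + 2 ∨ i = j + 1 ∨ i = j + 2 := by
  decide

theorem injective_of_ne_add {α : Type*} {f : ZMod 5 → α} (h₁ : ∀ i, f i ≠ f (i + 1))
    (h₂ : ∀ i, f i ≠ f (i + 2)) : Function.Injective f := by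
  intro i j hij
  obtain rfl | rfl | rfl | rfl | rfl := zmod_five_cases i j
  exacts [rfl, absurd hij (h₁ i), absurd hij (h₂ i), absurd hij.symm (h₁ j),
    absurd hij.symm (h₂ j)]

variable {V : Type*} [Fintype V] {G : SimpleGraph V} [DecidableRel G.Adj] {n k : ℕ}

theorem exists_pentagon [Nonempty V] (hG : G.IsSRGWith n k 0 1) (hk : 2 < k) :
    ∃ x : ZMod 5 → V, (∀ i, G.Adj (x i) (x (i + 1))) ∧ ∀ i, x i ≠ x (i + 2) := by
  obtain ⟨o⟩ := ‹Nonempty V›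
  obtain ⟨a, hoa, -⟩ := exists_adj_ne_ne hG.regular hk o o o
  obtain ⟨b, hob, hba, -⟩ := exists_adj_ne_ne hG.regular hk o a a
  obtain ⟨c, hac, hco, -⟩ := exists_adj_ne_ne hG.regular hk a o o
  have hab : ¬ G.Adj a b := not_adj_of_common_neighbor hG hoa.symm hob.symm
  have hoc : ¬ G.Adj o c := not_adj_of_common_neighbor hG hoa hac.symm
  have hcb : ¬ G.Adj c b := fun h => hba (common_neighbor_unique hG hco h hob hac.symm hoa)
  have hcb_ne : c ≠ b := by rintro rfl; exact hab hac
  obtain ⟨d, hcd, hbd⟩ := exists_common_neighbor hG hcb_ne hcb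
  have had : a ≠ d := by rintro rfl; exact hab hbd.symm
  have hdo : d ≠ o := by rintro rfl; exact hoc hcd.symm
  refine ⟨![o, a, c, d, b], fun i => ?_, fun i => ?_⟩
  · fin_cases i
    exacts [hoa, hac, hcd, hbd.symm, hob.symm]
  · fin_cases i
    exacts [hco.symm, had, hcb_ne, hdo, hba]

/-- A pentagon `x` together with the third neighbours `y i` of its vertices. -/
structure IsSpokedPentagon (G : SimpleGraph V) (x y : ZMod 5 → V) : Prop where
  rim (i : ZMod 5) : G.Adj (x i) (x (i + 1))
  ne_add_two (i : ZMod 5) : x i ≠ x (i + 2)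
  spoke (i : ZMod 5) : G.Adj (x i) (y i)
  ne_succ (i : ZMod 5) : y i ≠ x (i + 1)
  ne_pred (i : ZMod 5) : y (i + 1) ≠ x i

theorem exists_isSpokedPentagon [Nonempty V] (hG : G.IsSRGWith n k 0 1) (hk : 2 < k) :
    ∃ x y, IsSpokedPentagon G x y := by
  obtain ⟨x, rim, ne_add_two⟩ := exists_pentagon hG hk
  choose y spoke ne_succ ne_pred using fun i =>
    exists_adj_ne_ne hG.regular hk (x i) (x (i + 1)) (x (i - 1))
  exact ⟨x, y, rim, ne_add_two, spoke, ne_succ, fun i => by simpa using ne_pred (i + 1)⟩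

namespace IsSpokedPentagon

variable {x y : ZMod 5 → V}

theorem not_adj_add_two (h : IsSpokedPentagon G x y) (hG : G.IsSRGWith n k 0 1) (i : ZMod 5) :
    ¬ G.Adj (x i) (x (i + 2)) := by
  refine not_adj_of_common_neighbor hG (h.rim i) ?_
  simpa [add_assoc, one_add_one_eq_two] using (h.rim (i + 1)).symm

theorem eq_of_adj (h : IsSpokedPentagon G x y) (hG : G.IsRegularOfDegree 3) {i : ZMod 5} {z : V}
    (hz : G.Adj (x (i + 1)) z) : z = x i ∨ z = x (i + 2) ∨ z = y (i + 1) := by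
  classical
  have rim' := h.rim (i + 1)
  have ne_succ' := h.ne_succ (i + 1)
  rw [add_assoc, one_add_one_eq_two] at rim' ne_succ'
  have hsub : {x i, x (i + 2), y (i + 1)} ⊆ G.neighborFinset (x (i + 1)) := by
    grind [SimpleGraph.mem_neighborFinset, h.spoke (i + 1), (h.rim i).symm]
  have heq := eq_of_subset_of_card_le hsub (by
    rw [G.card_neighborFinset_eq_degree, hG.degree_eq, card_eq_three.mpr ⟨_, _, _,
      h.ne_add_two i, (h.ne_pred i).symm, ne_succ'.symm, rfl⟩])
  simpa [← heq] using (G.mem_neighborFinset _ z).mpr hz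

theorem adj_inner (h : IsSpokedPentagon G x y) (hG : G.IsSRGWith n 3 0 1) (i : ZMod 5) :
    G.Adj (y i) (y (i + 2)) := by
  have rim' (i : ZMod 5) : G.Adj (x (i + 1)) (x (i + 2)) := by
    simpa [add_assoc, one_add_one_eq_two] using h.rim (i + 1)
  have hne : y i ≠ x (i + 2) := fun he => h.not_adj_add_two hG i (he ▸ h.spoke i)
  have hadj : ¬ G.Adj (y i) (x (i + 2)) := fun hadj => h.ne_succ i <|
    common_neighbor_unique hG (h.ne_add_two i) (h.spoke i) hadj.symm (h.rim i) (rim' i).symm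
  obtain ⟨z, hyz, hxz⟩ := exists_common_neighbor hG hne hadj
  obtain rfl | rfl | rfl := h.eq_of_adj hG.regular (i := i + 1)
    (by simpa [add_assoc, one_add_one_eq_two] using hxz)
  · exact absurd hyz.symm (not_adj_of_common_neighbor hG (h.rim i).symm (h.spoke i).symm)
  · obtain ⟨j, rfl⟩ : ∃ j, j + 2 = i := ⟨i - 2, sub_add_cancel i 2⟩
    rw [(by decide : ∀ j : ZMod 5, j + 2 + 1 + 2 = j) j] at hyz
    refine absurd ?_ (h.ne_pred (j + 1))
    rw [add_assoc, one_add_one_eq_two]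
    exact common_neighbor_unique hG (h.ne_add_two j) hyz.symm (h.spoke _) (h.rim j) (rim' j).symm
  · simpa [add_assoc, one_add_one_eq_two] using hyz

theorem injective (h : IsSpokedPentagon G x y) (hG : G.IsSRGWith n 3 0 1) :
    Function.Injective (Sum.elim x y) := by
  refine .sumElim (injective_of_ne_add (fun i => (h.rim i).ne) h.ne_add_two)
    (injective_of_ne_add (fun i he => ?_) fun i => (h.adj_inner hG i).ne) fun i j he => ?_
  · exact not_adj_of_common_neighbor hG (h.spoke i) (he ▸ h.spoke (i + 1)) (h.rim i)
  · obtain rfl | rfl | rfl | rfl | rfl := zmod_five_cases i j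
    · exact (h.spoke j).ne he
    · exact h.ne_pred i he.symm
    · exact h.not_adj_add_two hG i (he ▸ h.spoke (i + 2)).symm
    · exact h.ne_succ j he.symm
    · exact h.not_adj_add_two hG j (he ▸ h.spoke j)

/-- The labelling of the Petersen graph by a spoked pentagon. -/
def hom (h : IsSpokedPentagon G x y) (hG : G.IsSRGWith n 3 0 1) : petersenGraph →g G where
  toFun := Sum.elim x y
  map_rel' := by
    rintro (i | i) (j | j) hij
    · obtain rfl | rfl := hij
      exacts [h.rim i, (h.rim j).symm]
    · obtain rfl := hij
      exact h.spoke i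
    · obtain rfl := hij
      exact (h.spoke i).symm
    · obtain rfl | rfl := hij
      exacts [h.adj_inner hG i, (h.adj_inner hG j).symm]

end IsSpokedPentagon

theorem nonempty_petersenGraph_iso (hG : G.IsSRGWith 10 3 0 1) :
    Nonempty (petersenGraph ≃g G) := by
  have : Nonempty V := Fintype.card_pos_iff.mp (by rw [hG.card]; norm_num)
  obtain ⟨x, y, h⟩ := exists_isSpokedPentagon hG (by norm_num)
  have hinj : Function.Injective (h.hom hG) := h.injective hG
  have hbij : Function.Bijective (h.hom hG) :=
    (Fintype.bijective_iff_injective_and_card _).mpr ⟨hinj, by rw [hG.card]; rfl⟩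
  refine ⟨Equiv.ofBijective _ hbij, fun {a b} => ⟨fun hab => ?_, (h.hom hG).map_rel⟩⟩
  by_contra hab'
  obtain ⟨c, hac, hbc⟩ := petersenGraph_exists_common_neighbor a b
    (fun he => hab.ne (congrArg _ he)) hab'
  exact not_adj_of_common_neighbor hG ((h.hom hG).map_rel hac) ((h.hom hG).map_rel hbc) hab

end Petersen

section PairWord

variable {ι : Type*} [DecidableEq ι] {i j k o : ι} {s t : Finset ι}

/-- The word over `{0, 1, 2}` with ones at `i` and `j` and twos on `s`. -/
def pairWord (i j : ι) (s : Finset ι) (m : ι) : ℕ :=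
  if m = i ∨ m = j then 1 else if m ∈ s then 2 else 0

theorem pairWord_comm (i j : ι) (s : Finset ι) : pairWord i j s = pairWord j i s := by
  ext m
  simp only [pairWord, or_comm]

theorem pairWord_apply_left (i j : ι) (s : Finset ι) : pairWord i j s i = 1 := by simp [pairWord]

theorem pairWord_comp {κ : Type*} [DecidableEq κ] (σ : κ ≃ ι) (i j : κ) (s : Finset κ) :
    pairWord (σ i) (σ j) (s.map σ.toEmbedding) ∘ σ = pairWord i j s := by
  ext m
  simp [pairWord]

theorem dotProduct_pairWord [Fintype ι] (q : ι → ℕ) (hij : i ≠ j) (hi : i ∉ s) (hj : j ∉ s) :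
    q ⬝ᵥ pairWord i j s = q i + q j + 2 * ∑ m ∈ s, q m := by
  have h : ∀ m, q m * pairWord i j s m = (if m = i then q m else 0) + (if m = j then q m else 0) +
      2 * if m ∈ s then q m else 0 := fun m => by
    unfold pairWord
    split_ifs <;> grind
  simp only [dotProduct, h, sum_add_distrib, ← mul_sum, sum_ite_eq', mem_univ, if_true,
    ← sum_filter, filter_univ_mem]

theorem dotProduct_pairWord_pairWord [Fintype ι] (hjo : j ≠ o) (hij : i ≠ j)
    (his : i ∉ s) (hot : o ∉ t) (hjt : j ∉ t) :
    pairWord o i s ⬝ᵥ pairWord o j t =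
      1 + 2 * ((if i ∈ t then 1 else 0) + (if j ∈ s then 1 else 0) + 2 * #(s ∩ t)) := by
  have hj : pairWord o i s j = 2 * if j ∈ s then 1 else 0 := by
    simp [pairWord, hjo, hij.symm]
  have ht : ∀ m ∈ t, pairWord o i s m = (if m = i then 1 else 0) + 2 * if m ∈ s then 1 else 0 := by
    intro m hm
    unfold pairWord
    split_ifs <;> grind
  rw [dotProduct_pairWord _ hjo.symm hot hjt, pairWord_apply_left, hj, sum_congr rfl ht,
    sum_add_distrib, sum_ite_eq', ← mul_sum, sum_boole, filter_mem_eq_inter, inter_comm]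
  push_cast
  ring

end PairWord

section StronglyRegular

variable {V : Type*} [Fintype V] [DecidableEq V] {k : ℕ}

theorem exists_isSRGWith_of_card_inter (s : V → Finset V) (hcard : ∀ i, #(s i) = k)
    (hirrefl : ∀ i, i ∉ s i)
    (hinter : ∀ i j, i ≠ j →
      (if i ∈ s j then 1 else 0) + (if j ∈ s i then 1 else 0) + 2 * #(s i ∩ s j) = 2) :
    ∃ (G : SimpleGraph V) (_ : DecidableRel G.Adj),
      (∀ i, G.neighborFinset i = s i) ∧ G.IsSRGWith (Fintype.card V) k 0 1 := by
  have symm (i j : V) (h : j ∈ s i) : i ∈ s j := by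
    have := hinter i j (by rintro rfl; exact hirrefl i h)
    grind
  let G : SimpleGraph V := ⟨fun i j => j ∈ s i, ⟨symm⟩, ⟨hirrefl⟩⟩
  have : DecidableRel G.Adj := fun i j => inferInstanceAs (Decidable (j ∈ s i))
  have hN (i : V) : G.neighborFinset i = s i := by ext; simp [G]
  have hcommon (i j : V) : Fintype.card (G.commonNeighbors i j) = #(s i ∩ s j) := by
    rw [← hN, ← hN, ← Set.toFinset_card]
    congr 1
    ext
    simp [SimpleGraph.mem_commonNeighbors]
  refine ⟨G, this, hN, rfl, fun i => ?_, fun i j hij => ?_, fun i j hne hij => ?_⟩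
  · rw [← G.card_neighborFinset_eq_degree, hN, hcard]
  · have := hinter i j hij.ne
    rw [hcommon]
    grind [show j ∈ s i from hij]
  · have := hinter i j hne
    rw [hcommon]
    grind [show ¬ j ∈ s i from hij]

end StronglyRegular

theorem map_neighborFinset_iso {V W : Type*} [Fintype V] [Fintype W] {G : SimpleGraph V}
    {H : SimpleGraph W} [DecidableRel G.Adj] [DecidableRel H.Adj] (φ : G ≃g H) (v : V) :
    (G.neighborFinset v).map φ.toEquiv.toEmbedding = H.neighborFinset (φ v) := by
  ext w
  obtain ⟨u, rfl⟩ := φ.surjective w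
  refine (mem_map' φ.toEquiv.toEmbedding).trans ?_
  simp [φ.map_adj_iff]

/-- The combinatorial trace of a configuration on a regular simplex inscribed in it: a set of words
over `{0, 1, 2}`, one for each vector `x` off the simplex, whose digit `p m` encodes the inner
product of `x` with the `m`-th vertex. The words of `x` and `y` have product
`(64 + 90 * ⟪x, y⟫) / 11`, which turns the values `-7 / 15`, `-1 / 10`, `4 / 15`, `1` into
`2`, `5`, `8`, `14`. -/
structure IsSimplexCode (C : Set (Fin 11 → ℕ)) : Prop where
  le_two : ∀ p ∈ C, ∀ m, p m ≤ 2
  sum_eq : ∀ p ∈ C, ∑ m, p m = 8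
  dotProduct_self : ∀ p ∈ C, p ⬝ᵥ p = 14
  dotProduct_mem : ∀ p ∈ C, ∀ q ∈ C, p ⬝ᵥ q ∈ ({2, 5, 8, 14} : Finset ℕ)
  exists_eq_one : ∀ i j, i ≠ j → ∃ p ∈ C, p i = 1 ∧ p j = 1

namespace IsSimplexCode

variable {C : Set (Fin 11 → ℕ)} {p : Fin 11 → ℕ} {i j : Fin 11}

theorem image (hC : IsSimplexCode C) (σ : Equiv.Perm (Fin 11)) :
    IsSimplexCode ((· ∘ σ) '' C) where
  le_two := by
    rintro _ ⟨p, hp, rfl⟩ m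
    exact hC.le_two p hp (σ m)
  sum_eq := by
    rintro _ ⟨p, hp, rfl⟩
    exact (Equiv.sum_comp σ p).trans (hC.sum_eq p hp)
  dotProduct_self := by
    rintro _ ⟨p, hp, rfl⟩
    simpa using hC.dotProduct_self p hp
  dotProduct_mem := by
    rintro _ ⟨p, hp, rfl⟩ _ ⟨q, hq, rfl⟩
    simpa using hC.dotProduct_mem p hp q hq
  exists_eq_one i j hij := by
    obtain ⟨p, hp, hi, hj⟩ := hC.exists_eq_one (σ i) (σ j) (σ.injective.ne hij)
    exact ⟨p ∘ σ, ⟨p, hp, rfl⟩, hi, hj⟩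

theorem card_filter (hC : IsSimplexCode C) (hp : p ∈ C) :
    #{m | p m = 1} = 2 ∧ #{m | p m = 2} = 3 := by
  have hdigit (m : Fin 11) : p m = (if p m = 1 then 1 else 0) + 2 * (if p m = 2 then 1 else 0) ∧
      p m * p m = (if p m = 1 then 1 else 0) + 4 * (if p m = 2 then 1 else 0) := by
    have := hC.le_two p hp m
    interval_cases p m <;> simp
  have hsum := hC.sum_eq p hp
  have hself := hC.dotProduct_self p hp
  rw [sum_congr rfl fun m _ => (hdigit m).1] at hsum
  rw [dotProduct, sum_congr rfl fun m _ => (hdigit m).2] at hself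
  simp only [sum_add_distrib, ← mul_sum, sum_boole, Nat.cast_id] at hsum hself
  omega

theorem exists_lt_eq_one (hC : IsSimplexCode C) (hp : p ∈ C) :
    ∃ i j, i < j ∧ p i = 1 ∧ p j = 1 := by
  obtain ⟨i, hi, j, hj, hij⟩ := one_lt_card.mp ((hC.card_filter hp).1.symm ▸ one_lt_two)
  simp only [mem_filter_univ] at hi hj
  rcases hij.lt_or_gt with h | h
  exacts [⟨i, j, h, hi, hj⟩, ⟨j, i, h, hj, hi⟩]

theorem exists_eq_pairWord (hC : IsSimplexCode C) (hp : p ∈ C) (hij : i ≠ j) (hi : p i = 1)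
    (hj : p j = 1) : ∃ s : Finset (Fin 11), #s = 3 ∧ i ∉ s ∧ j ∉ s ∧ p = pairWord i j s := by
  refine ⟨({m | p m = 2} : Finset (Fin 11)), (hC.card_filter hp).2, by simp [hi], by simp [hj], ?_⟩
  have hones : ({i, j} : Finset (Fin 11)) = ({m | p m = 1} : Finset (Fin 11)) :=
    eq_of_subset_of_card_le (by grind) (by rw [card_pair hij, (hC.card_filter hp).1])
  ext m
  have hle := hC.le_two p hp m
  have hm : (m = i ∨ m = j) ↔ p m = 1 := by simpa using congrArg (m ∈ ·) hones
  simp only [pairWord, hm, mem_filter_univ]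
  split_ifs <;> omega

/-- For triples `sᵢ`, `sⱼ` the product of the words through `{o, i}` and `{o, j}` is odd, hence
equal to `5`, which makes the triples the neighbourhoods of a Moore graph. -/
theorem exists_link (hC : IsSimplexCode C) (o : Fin 11) :
    ∃ (G : SimpleGraph {m // m ≠ o}) (_ : DecidableRel G.Adj), G.IsSRGWith 10 3 0 1 ∧
      ∀ k : {m // m ≠ o}, pairWord o k ((G.neighborFinset k).map (.subtype _)) ∈ C := by
  choose p hp hpo hpk using fun k : {m // m ≠ o} => hC.exists_eq_one o k k.2.symm
  choose s hcard hos hks hps using fun k : {m // m ≠ o} =>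
    hC.exists_eq_pairWord (hp k) k.2.symm (hpo k) (hpk k)
  have hmap (k : {m // m ≠ o}) : ((s k).subtype (· ≠ o)).map (.subtype _) = s k := by
    rw [subtype_map, filter_true_of_mem]
    exact fun m hm hmo => hos k (hmo ▸ hm)
  obtain ⟨G, _, hN, hG⟩ := exists_isSRGWith_of_card_inter (k := 3)
    (fun k => (s k).subtype (· ≠ o)) (fun k => by rw [← card_map (.subtype _), hmap, hcard])
    (fun k => by simpa using hks k) fun i j hij => by
      have hdot := hC.dotProduct_mem _ (hp i) _ (hp j)
      rw [hps i, hps j, dotProduct_pairWord_pairWord j.2 (Subtype.coe_ne_coe.mpr hij) (hks i)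
        (hos j) (hks j)] at hdot
      rw [← card_map (.subtype _), map_inter, hmap, hmap]
      simp only [mem_subtype]
      simp only [mem_insert, mem_singleton] at hdot
      omega
  refine ⟨G, _, by simpa using hG, fun k => ?_⟩
  rw [hN, hmap, ← hps]
  exact hp k

end IsSimplexCode

section Biplane

/-- The blocks of the Paley biplane, the translates of the nonzero squares modulo `11`. -/
def biplaneBlock (t : Fin 11) : Finset (Fin 11) := {t + 1, t + 3, t + 4, t + 5, t + 9}

/-- The three points that lie on neither of the two blocks through `i` and `j`. -/
def biplaneTriple (i j : Fin 11) : Finset (Fin 11) :=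
  {m | ¬ ∃ t, i ∈ biplaneBlock t ∧ j ∈ biplaneBlock t ∧ m ∈ biplaneBlock t}

/-- The word with ones at `i` and `j` and twos off the blocks through `i` and `j`. -/
def biplaneWord (i j : Fin 11) : Fin 11 → ℕ := pairWord i j (biplaneTriple i j)

/-- The standard simplex code, to which every other one is equivalent. -/
def biplaneCode : Set (Fin 11 → ℕ) := {p | ∃ i j, i < j ∧ p = biplaneWord i j}

/-- An automorphism of the link of `0` in the biplane that does not extend to the biplane: the link
is a Petersen graph, all of whose automorphisms are induced by `S₅`, while the stabilizer of `0` in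
the automorphism group of the biplane is `A₅`. -/
def biplaneFlip : Equiv.Perm (Fin 11) where
  toFun := ![0, 7, 3, 8, 2, 10, 5, 1, 4, 6, 9]
  invFun := ![0, 7, 4, 2, 8, 6, 9, 1, 3, 10, 5]
  left_inv := by decide
  right_inv := by decide

theorem biplaneWord_comm (i j : Fin 11) : biplaneWord i j = biplaneWord j i := by
  simp only [biplaneWord, biplaneTriple, pairWord_comm i j, and_left_comm]

set_option maxRecDepth 100000 in
theorem map_biplaneFlip_biplaneTriple (k : Fin 11) :
    (biplaneTriple 0 k).map biplaneFlip.toEmbedding = biplaneTriple 0 (biplaneFlip k) := by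
  decide +kernel +revert

set_option maxRecDepth 100000 in
theorem filter_sum_biplaneWord_mem_subset (i j : Fin 11) (hij : i < j) :
    (powersetCard 3 univ).filter (fun s => i ∉ s ∧ j ∉ s ∧ ∀ k, k ≠ 0 →
      biplaneWord 0 k i + biplaneWord 0 k j + 2 * ∑ m ∈ s, biplaneWord 0 k m ∈
        ({2, 5, 8, 14} : Finset ℕ)) ⊆
    {biplaneTriple i j,
      (biplaneTriple (biplaneFlip i) (biplaneFlip j)).map biplaneFlip.symm.toEmbedding} := by
  decide +kernel +revert

theorem biplaneFlip_zero : biplaneFlip 0 = 0 := rfl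

theorem biplaneFlip_one : biplaneFlip 1 = 7 := rfl

theorem biplaneFlip_seven : biplaneFlip 7 = 1 := rfl

theorem biplaneWord_comp_biplaneFlip (k : Fin 11) :
    biplaneWord 0 (biplaneFlip k) ∘ biplaneFlip = biplaneWord 0 k := by
  rw [biplaneWord, ← map_biplaneFlip_biplaneTriple]
  exact pairWord_comp biplaneFlip 0 k _

set_option maxRecDepth 100000 in
theorem biplaneFlip_dotProduct_notMem (i j : Fin 11) (hij : i < j)
    (hne : biplaneWord (biplaneFlip i) (biplaneFlip j) ∘ biplaneFlip ≠ biplaneWord i j) :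
    (biplaneWord (biplaneFlip i) (biplaneFlip j) ∘ biplaneFlip) ⬝ᵥ biplaneWord 1 7 ∉
      ({2, 5, 8, 14} : Finset ℕ) := by
  decide +kernel +revert

set_option maxRecDepth 100000 in
theorem biplaneTriple_card_inter (i j : Fin 11) (hi : i ≠ 0) (hj : j ≠ 0) (hij : i ≠ j) :
    (if i ∈ biplaneTriple 0 j then 1 else 0) + (if j ∈ biplaneTriple 0 i then 1 else 0) +
      2 * #(biplaneTriple 0 i ∩ biplaneTriple 0 j) = 2 := by
  decide +kernel +revert

theorem exists_biplaneLink : ∃ (G : SimpleGraph {m : Fin 11 // m ≠ 0}) (_ : DecidableRel G.Adj),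
    G.IsSRGWith 10 3 0 1 ∧ ∀ k, (G.neighborFinset k).map (.subtype _) = biplaneTriple 0 k := by
  have hmap (k : {m : Fin 11 // m ≠ 0}) :
      ((biplaneTriple 0 k).subtype (· ≠ 0)).map (.subtype _) = biplaneTriple 0 k := by
    decide +kernel +revert
  obtain ⟨G, _, hN, hG⟩ := exists_isSRGWith_of_card_inter (k := 3)
    (fun k : {m : Fin 11 // m ≠ 0} => (biplaneTriple 0 k).subtype (· ≠ 0))
    (by decide +kernel) (by decide +kernel) fun i j hij => by
      rw [← card_map (.subtype _), map_inter, hmap, hmap]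
      simpa only [mem_subtype] using
        biplaneTriple_card_inter i j i.2 j.2 (Subtype.coe_ne_coe.mpr hij)
  exact ⟨G, _, hG, fun k => by rw [hN, hmap]⟩

end Biplane

namespace IsSimplexCode

variable {C C' : Set (Fin 11 → ℕ)} {p : Fin 11 → ℕ} {i j : Fin 11}

theorem exists_perm_rows (hC : IsSimplexCode C) :
    ∃ σ : Equiv.Perm (Fin 11), ∀ k ≠ 0, biplaneWord 0 k ∈ (· ∘ σ) '' C := by
  obtain ⟨B, _, hB, hNB⟩ := exists_biplaneLink
  obtain ⟨G, _, hG, hNG⟩ := hC.exists_link 0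
  obtain ⟨φ⟩ := nonempty_petersenGraph_iso hB
  obtain ⟨ψ⟩ := nonempty_petersenGraph_iso hG
  let π : B ≃g G := φ.symm.trans ψ
  let σ : Equiv.Perm (Fin 11) := Equiv.Perm.ofSubtype π.toEquiv
  have hσ₀ : σ 0 = 0 := Equiv.Perm.ofSubtype_apply_of_not_mem _ (by simp)
  have hσ (k : {m : Fin 11 // m ≠ 0}) : σ k = π k := Equiv.Perm.ofSubtype_apply_coe _ k
  refine ⟨σ, fun k hk => ⟨_, hNG (π ⟨k, hk⟩), ?_⟩⟩
  have hN : (G.neighborFinset (π ⟨k, hk⟩)).map (.subtype _) =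
      (biplaneTriple 0 k).map σ.toEmbedding := by
    rw [← hNB ⟨k, hk⟩, ← map_neighborFinset_iso, map_map, map_map]
    congr 1
    ext m
    simp [hσ]
  have hcomp := pairWord_comp σ 0 k (biplaneTriple 0 k)
  rwa [hσ₀, hσ ⟨k, hk⟩, ← hN] at hcomp

theorem eq_or_eq_of_rows (hC : IsSimplexCode C) (hrow : ∀ k ≠ 0, biplaneWord 0 k ∈ C) (hp : p ∈ C)
    (hij : i < j) (hi : p i = 1) (hj : p j = 1) :
    p = biplaneWord i j ∨ p = biplaneWord (biplaneFlip i) (biplaneFlip j) ∘ biplaneFlip := by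
  obtain ⟨s, hcard, his, hjs, rfl⟩ := hC.exists_eq_pairWord hp hij.ne hi hj
  have hs := filter_sum_biplaneWord_mem_subset i j hij <| mem_filter.mpr
    ⟨mem_powersetCard_univ.mpr hcard, his, hjs, fun k hk => by
      rw [← dotProduct_pairWord _ hij.ne his hjs]
      exact hC.dotProduct_mem _ (hrow k hk) _ hp⟩
  obtain rfl | rfl := by simpa only [mem_insert, mem_singleton] using hs
  · exact .inl rfl
  · right
    rw [biplaneWord, ← pairWord_comp biplaneFlip, map_map]
    simp

theorem exists_perm_rows_and_word (hC : IsSimplexCode C) :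
    ∃ σ : Equiv.Perm (Fin 11),
      (∀ k ≠ 0, biplaneWord 0 k ∈ (· ∘ σ) '' C) ∧ biplaneWord 1 7 ∈ (· ∘ σ) '' C := by
  obtain ⟨σ, hσ⟩ := hC.exists_perm_rows
  obtain ⟨p, hp, h₁, h₇⟩ := (hC.image σ).exists_eq_one 1 7 (by decide)
  obtain h | h := (hC.image σ).eq_or_eq_of_rows hσ hp (by decide) h₁ h₇
  · exact ⟨σ, hσ, h ▸ hp⟩
  have himage : (· ∘ ⇑(biplaneFlip.symm.trans σ)) '' C =
      (· ∘ biplaneFlip.symm) '' ((· ∘ σ) '' C) := by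
    rw [Set.image_image]
    rfl
  rw [biplaneFlip_one, biplaneFlip_seven, biplaneWord_comm] at h
  refine ⟨biplaneFlip.symm.trans σ, himage ▸ fun k hk => ⟨_, hσ (biplaneFlip.symm k) ?_, ?_⟩,
    himage ▸ ⟨p, hp, (Equiv.comp_symm_eq _ _ _).mpr h⟩⟩
  · rwa [Ne, Equiv.symm_apply_eq, biplaneFlip_zero]
  · rw [Equiv.comp_symm_eq, ← biplaneWord_comp_biplaneFlip, Equiv.apply_symm_apply]

theorem image_eq_biplaneCode (hC : IsSimplexCode C) (hrow : ∀ k ≠ 0, biplaneWord 0 k ∈ C)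
    (hword : biplaneWord 1 7 ∈ C) : C = biplaneCode := by
  have heq {p i j} (hp : p ∈ C) (hij : i < j) (hi : p i = 1) (hj : p j = 1) :
      p = biplaneWord i j := by
    obtain rfl | rfl := hC.eq_or_eq_of_rows hrow hp hij hi hj
    · rfl
    · by_contra hne
      exact biplaneFlip_dotProduct_notMem i j hij hne (hC.dotProduct_mem _ hp _ hword)
  ext p
  constructor
  · intro hp
    obtain ⟨i, j, hij, hi, hj⟩ := hC.exists_lt_eq_one hp
    exact ⟨i, j, hij, heq hp hij hi hj⟩
  · rintro ⟨i, j, hij, rfl⟩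
    obtain ⟨p, hp, hi, hj⟩ := hC.exists_eq_one i j hij.ne
    exact heq hp hij hi hj ▸ hp

theorem exists_perm_image_eq (hC : IsSimplexCode C) (hC' : IsSimplexCode C') :
    ∃ σ : Equiv.Perm (Fin 11), (· ∘ σ) '' C = C' := by
  obtain ⟨σ, hσ, hσ₁⟩ := hC.exists_perm_rows_and_word
  obtain ⟨τ, hτ, hτ₁⟩ := hC'.exists_perm_rows_and_word
  have h := ((hC.image σ).image_eq_biplaneCode hσ hσ₁).trans
    ((hC'.image τ).image_eq_biplaneCode hτ hτ₁).symm
  refine ⟨τ.symm.trans σ, ?_⟩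
  have h' := congrArg ((· ∘ τ.symm) '' ·) h
  simp only [Set.image_image, Function.comp_assoc] at h'
  simpa using h'

end IsSimplexCode

section Gram

variable {ι 𝕜 E E' : Type*} [RCLike 𝕜] [NormedAddCommGroup E] [InnerProductSpace 𝕜 E]
  [NormedAddCommGroup E'] [InnerProductSpace 𝕜 E'] {c : ι → E} {c' : ι → E'}

theorem ext_inner_of_span_eq_top (hc : Submodule.span 𝕜 (Set.range c) = ⊤) {x y : E}
    (h : ∀ i, inner 𝕜 (c i) x = inner 𝕜 (c i) y) : x = y := by
  have hle : Submodule.span 𝕜 (Set.range c) ≤ (𝕜 ∙ (x - y))ᗮ := by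
    rw [Submodule.span_le]
    rintro _ ⟨i, rfl⟩
    rw [SetLike.mem_coe, Submodule.mem_orthogonal_singleton_iff_inner_left, inner_sub_right, h,
      sub_self]
  rw [hc, top_le_iff, Submodule.orthogonal_eq_top_iff, Submodule.span_singleton_eq_bot] at hle
  exact sub_eq_zero.mp hle

theorem inner_linearCombination_eq (h : ∀ i j, inner 𝕜 (c i) (c j) = inner 𝕜 (c' i) (c' j))
    (a b : ι →₀ 𝕜) :
    inner 𝕜 (Finsupp.linearCombination 𝕜 c a) (Finsupp.linearCombination 𝕜 c b) =
      inner 𝕜 (Finsupp.linearCombination 𝕜 c' a) (Finsupp.linearCombination 𝕜 c' b) := by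
  simp only [Finsupp.linearCombination_apply, Finsupp.sum, sum_inner, inner_sum, inner_smul_left,
    inner_smul_right, h]

theorem exists_linearIsometryEquiv_of_inner_eq (hc : Submodule.span 𝕜 (Set.range c) = ⊤)
    (hc' : Submodule.span 𝕜 (Set.range c') = ⊤)
    (h : ∀ i j, inner 𝕜 (c i) (c j) = inner 𝕜 (c' i) (c' j)) :
    ∃ f : E ≃ₗᵢ[𝕜] E', ∀ i, f (c i) = c' i := by
  let L := Finsupp.linearCombination 𝕜 c
  let L' := Finsupp.linearCombination 𝕜 c'
  have hL (i : ι) : L (.single i 1) = c i := by simp [L]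
  have hL' (i : ι) : L' (.single i 1) = c' i := by simp [L']
  obtain ⟨s, hs⟩ :=
    L.exists_rightInverse_of_surjective (by rw [Finsupp.range_linearCombination, hc])
  have hLs (x : E) : L (s x) = x := LinearMap.congr_fun hs x
  have hinner (x y : E) : inner 𝕜 (L' (s x)) (L' (s y)) = inner 𝕜 x y := by
    rw [← inner_linearCombination_eq h, hLs, hLs]
  have hmap (i : ι) : L' (s (c i)) = c' i := by
    refine ext_inner_of_span_eq_top hc' fun j => ?_
    rw [← hL' j, ← inner_linearCombination_eq h, hLs, hL, h, hL']
  let g : E →ₗᵢ[𝕜] E' := (L' ∘ₗ s).isometryOfInner hinner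
  have hsurj : Function.Surjective g := by
    rw [← LinearIsometry.coe_toLinearMap, ← LinearMap.range_eq_top, eq_top_iff, ← hc',
      Submodule.span_le]
    rintro _ ⟨i, rfl⟩
    exact ⟨c i, hmap i⟩
  exact ⟨LinearIsometryEquiv.ofSurjective g hsurj, hmap⟩

end Gram

section Simplex

variable {ι E : Type*} [Fintype ι] [NormedAddCommGroup E] [InnerProductSpace ℝ E]

/-- The vertices of a regular simplex inscribed in the unit sphere of `E`. -/
structure IsRegularSimplex (c : ι → E) : Prop where
  card_eq : Fintype.card ι = Module.finrank ℝ E + 1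
  inner_self : ∀ i, ⟪c i, c i⟫ = 1
  inner_of_ne : ∀ i j, i ≠ j → ⟪c i, c j⟫ = -(Module.finrank ℝ E : ℝ)⁻¹

namespace IsRegularSimplex

variable {c : ι → E}

theorem inner_eq [DecidableEq ι] (hc : IsRegularSimplex c) (i j : ι) :
    ⟪c i, c j⟫ = (if i = j then 1 + (Module.finrank ℝ E : ℝ)⁻¹ else 0) -
      (Module.finrank ℝ E : ℝ)⁻¹ := by
  split_ifs with h
  · rw [h, hc.inner_self, add_sub_cancel_right]
  · rw [hc.inner_of_ne i j h, zero_sub]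

theorem injective (hc : IsRegularSimplex c) : Function.Injective c := by
  intro i j hij
  by_contra hne
  have h := hc.inner_of_ne i j hne
  rw [← hij, hc.inner_self] at h
  have : (0 : ℝ) ≤ (Module.finrank ℝ E : ℝ)⁻¹ := by positivity
  linarith

theorem comp_equiv {κ : Type*} [Fintype κ] (hc : IsRegularSimplex c) (e : κ ≃ ι) :
    IsRegularSimplex (c ∘ e) where
  card_eq := (Fintype.card_congr e).trans hc.card_eq
  inner_self i := hc.inner_self (e i)
  inner_of_ne i j hij := hc.inner_of_ne (e i) (e j) (e.injective.ne hij)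

theorem inner_eq_inner {E' : Type*} [NormedAddCommGroup E'] [InnerProductSpace ℝ E'] {c' : ι → E'}
    (hc : IsRegularSimplex c) (hc' : IsRegularSimplex c') (i j : ι) :
    ⟪c i, c j⟫ = ⟪c' i, c' j⟫ := by
  classical
  have hfinrank : Module.finrank ℝ E = Module.finrank ℝ E' :=
    Nat.succ_injective (hc.card_eq.symm.trans hc'.card_eq)
  rw [hc.inner_eq, hc'.inner_eq, hfinrank]

theorem inner_sum_smul (hc : IsRegularSimplex c) (a : ι → ℝ) (i : ι) :
    ⟪c i, ∑ j, a j • c j⟫ = a i * (1 + (Module.finrank ℝ E : ℝ)⁻¹) -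
      (∑ j, a j) * (Module.finrank ℝ E : ℝ)⁻¹ := by
  classical
  simp only [inner_sum, real_inner_smul_right, hc.inner_eq, mul_sub, sum_sub_distrib, mul_ite,
    mul_zero, sum_ite_eq, mem_univ, if_true, sum_mul]

variable [FiniteDimensional ℝ E]

theorem finrank_ne_zero (hc : IsRegularSimplex c) : (Module.finrank ℝ E : ℝ) ≠ 0 := by
  obtain ⟨i⟩ : Nonempty ι := Fintype.card_pos_iff.mp (hc.card_eq ▸ Nat.succ_pos _)
  have : Nontrivial E := nontrivial_of_ne (c i) 0 fun h => by simpa [h] using hc.inner_self i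
  exact_mod_cast Module.finrank_pos.ne'

theorem span_eq_top (hc : IsRegularSimplex c) : Submodule.span ℝ (Set.range c) = ⊤ := by
  have hn := hc.finrank_ne_zero
  have hker : LinearMap.ker (Fintype.linearCombination ℝ c) ≤ Submodule.span ℝ {1} := by
    intro a ha
    rw [LinearMap.mem_ker, Fintype.linearCombination_apply] at ha
    refine Submodule.mem_span_singleton.mpr
      ⟨(∑ j, a j) / (Module.finrank ℝ E + 1), funext fun i => ?_⟩
    have h := hc.inner_sum_smul a i
    rw [ha, inner_zero_right] at h
    simp only [Pi.smul_apply, Pi.one_apply, smul_eq_mul, mul_one]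
    field_simp at h ⊢
    linarith
  have hker_le := (Submodule.finrank_mono hker).trans (finrank_span_le_card _)
  have hadd := (Fintype.linearCombination ℝ c).finrank_range_add_finrank_ker
  rw [Module.finrank_fintype_fun_eq_card, hc.card_eq] at hadd
  rw [← Fintype.range_linearCombination]
  refine Submodule.eq_top_of_finrank_eq (le_antisymm (Submodule.finrank_le _) ?_)
  simp only [Set.toFinset_singleton, card_singleton] at hker_le
  omega

theorem sum_eq_zero (hc : IsRegularSimplex c) : ∑ i, c i = 0 := by
  refine ext_inner_of_span_eq_top hc.span_eq_top fun i => ?_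
  have h := hc.inner_sum_smul 1 i
  have hn := hc.finrank_ne_zero
  simp only [Pi.one_apply, one_smul, sum_const, card_univ, hc.card_eq, nsmul_eq_mul, mul_one] at h
  rw [h, inner_zero_right]
  push_cast
  field_simp
  ring

theorem sum_inner_smul (hc : IsRegularSimplex c) (x : E) :
    ∑ i, ⟪c i, x⟫ • c i = (1 + (Module.finrank ℝ E : ℝ)⁻¹) • x := by
  refine ext_inner_of_span_eq_top hc.span_eq_top fun i => ?_
  rw [hc.inner_sum_smul, ← sum_inner, hc.sum_eq_zero, inner_zero_left, zero_mul, sub_zero,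
    real_inner_smul_right, mul_comm]

theorem sum_inner_mul_inner (hc : IsRegularSimplex c) (x y : E) :
    ∑ i, ⟪c i, x⟫ * ⟪c i, y⟫ = (1 + (Module.finrank ℝ E : ℝ)⁻¹) * ⟪x, y⟫ := by
  rw [← real_inner_smul_left, ← hc.sum_inner_smul, sum_inner]
  simp only [real_inner_smul_left]

end IsRegularSimplex

end Simplex

section Configuration

variable {E : Type*} [NormedAddCommGroup E] [InnerProductSpace ℝ E]

/-- The graph on a set of vectors whose edges are the pairs with inner product `a`. -/
def innerGraph (X : Set E) (a : ℝ) : SimpleGraph X where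
  Adj x y := x ≠ y ∧ ⟪(x : E), y⟫ = a
  symm := ⟨fun _ _ h => ⟨h.1.symm, (real_inner_comm _ _).trans h.2⟩⟩
  loopless := ⟨fun _ h => h.1 rfl⟩

theorem innerGraph_adj_iff {X : Set E} (hX : ∀ x ∈ X, ‖x‖ = 1) {a : ℝ} (ha : a ≠ 1) {x y : X} :
    (innerGraph X a).Adj x y ↔ ⟪(x : E), y⟫ = a := by
  refine ⟨And.right, fun h => ⟨?_, h⟩⟩
  rintro rfl
  rw [real_inner_self_eq_norm_sq, hX x x.2, one_pow] at h
  exact ha h.symm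

open Classical in
/-- A configuration with the inner products of the scheme `W`, of which only the relation `α2` is
asked to be regular: it has the parameters of the triangular graph `T(12)`. -/
structure IsTriangularConfig (X : Set E) [Fintype X] : Prop where
  finrank_eq : Module.finrank ℝ E = 10
  norm_eq_one : ∀ x ∈ X, ‖x‖ = 1
  inner_mem : ∀ x ∈ X, ∀ y ∈ X, x ≠ y → ⟪x, y⟫ ∈ ({4 / 15, -1 / 10, -7 / 15} : Set ℝ)
  isSRGWith : (innerGraph X (-1 / 10)).IsSRGWith 66 20 10 4

/-- The words encoding the vectors of `X` by their inner products with a simplex `c`. The digits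
`0`, `1`, `2` stand for `4 / 15`, `-1 / 10`, `-7 / 15`, and the vertices of `c` have no code. -/
def innerCode (X : Set E) (c : Fin 11 → E) : Set (Fin 11 → ℕ) :=
  {p | ∃ x ∈ X, ∀ m, ⟪c m, x⟫ = (8 - 11 * p m) / 30}

section Digits

variable {c : Fin 11 → E} {x y : E} {p q : Fin 11 → ℕ}

theorem IsRegularSimplex.finrank_eq_ten (hc : IsRegularSimplex c) : Module.finrank ℝ E = 10 := by
  simpa using hc.card_eq.symm

theorem IsRegularSimplex.finiteDimensional (hc : IsRegularSimplex c) : FiniteDimensional ℝ E :=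
  .of_finrank_pos (hc.finrank_eq_ten ▸ by norm_num)

theorem IsRegularSimplex.sum_digits (hc : IsRegularSimplex c)
    (hp : ∀ m, ⟪c m, x⟫ = (8 - 11 * p m) / 30) : ∑ m, p m = 8 := by
  have := hc.finiteDimensional
  have h : ∑ m, ⟪c m, x⟫ = 0 := by rw [← sum_inner, hc.sum_eq_zero, inner_zero_left]
  simp only [hp, ← sum_div, sum_sub_distrib, ← mul_sum, sum_const, card_univ, Fintype.card_fin,
    nsmul_eq_mul] at h
  rw [← Nat.cast_inj (R := ℝ)]
  push_cast at h ⊢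
  linarith

theorem IsRegularSimplex.dotProduct_digits (hc : IsRegularSimplex c)
    (hp : ∀ m, ⟪c m, x⟫ = (8 - 11 * p m) / 30) (hq : ∀ m, ⟪c m, y⟫ = (8 - 11 * q m) / 30) :
    ((p ⬝ᵥ q : ℕ) : ℝ) = (64 + 90 * ⟪x, y⟫) / 11 := by
  have := hc.finiteDimensional
  have hexpand (m : Fin 11) : ⟪c m, x⟫ * ⟪c m, y⟫ =
      16 / 225 - 22 / 225 * p m - 22 / 225 * q m + 121 / 900 * (p m * q m) := by
    rw [hp, hq]
    ring
  have h := hc.sum_inner_mul_inner x y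
  have hp' : ∑ m, (p m : ℝ) = 8 := mod_cast hc.sum_digits hp
  have hq' : ∑ m, (q m : ℝ) = 8 := mod_cast hc.sum_digits hq
  simp only [hexpand, sum_add_distrib, sum_sub_distrib, ← mul_sum, hp', hq', sum_const, card_univ,
    Fintype.card_fin, nsmul_eq_mul, hc.finrank_eq_ten] at h
  simp only [dotProduct, Nat.cast_sum, Nat.cast_mul]
  push_cast at h
  linarith

end Digits

namespace IsTriangularConfig

variable {X : Set E} [Fintype X] {c : Fin 11 → E} {x : E} {i j : Fin 11}

theorem inner_self (hX : IsTriangularConfig X) (hx : x ∈ X) : ⟪x, x⟫ = 1 := by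
  rw [real_inner_self_eq_norm_sq, hX.norm_eq_one x hx, one_pow]

theorem ncard_eq (hX : IsTriangularConfig X) : X.ncard = 66 := by
  classical
  rw [Set.ncard_eq_toFinset_card', Set.toFinset_card, hX.isSRGWith.card]

theorem exists_isRegularSimplex (hX : IsTriangularConfig X) :
    ∃ c : Fin 11 → E, IsRegularSimplex c ∧ ∀ i, c i ∈ X := by
  classical
  have : Nonempty X := Fintype.card_pos_iff.mp (by rw [hX.isSRGWith.card]; norm_num)
  obtain ⟨s, hs⟩ := exists_isNClique_succ (k := 10) hX.isSRGWith (by norm_num) (by norm_num)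
  let e : Fin 11 ≃ s := (s.equivFinOfCardEq hs.card_eq).symm
  refine ⟨fun i => (e i : X), ⟨?_, fun i => hX.inner_self (e i : X).2, fun i j hij => ?_⟩,
    fun i => (e i : X).2⟩
  · rw [hX.finrank_eq, Fintype.card_fin]
  · have hadj := hs.isClique (e i).2 (e j).2 (Subtype.coe_ne_coe.mpr (e.injective.ne hij))
    rw [hX.finrank_eq]
    exact hadj.2.trans (by norm_num)

theorem exists_digits (hX : IsTriangularConfig X) (hcX : ∀ i, c i ∈ X) (hx : x ∈ X)
    (hxc : x ∉ Set.range c) : ∃ p : Fin 11 → ℕ, ∀ m, ⟪c m, x⟫ = (8 - 11 * p m) / 30 := by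
  suffices h : ∀ m, ∃ d : ℕ, ⟪c m, x⟫ = (8 - 11 * d) / 30 from Classical.skolem.mp h
  intro m
  obtain h | h | h := hX.inner_mem (c m) (hcX m) x hx fun h => hxc ⟨m, h⟩
  · exact ⟨0, by norm_num [h]⟩
  · exact ⟨1, by norm_num [h]⟩
  · exact ⟨2, by norm_num [Set.mem_singleton_iff.mp h]⟩

theorem digit_le_two (hX : IsTriangularConfig X) (hcX : ∀ i, c i ∈ X) (hx : x ∈ X) {d : ℕ}
    (hd : ⟪c i, x⟫ = (8 - 11 * d) / 30) : d ≤ 2 := by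
  rw [← Nat.cast_le (α := ℝ)]
  by_cases h : c i = x
  · rw [h, hX.inner_self hx] at hd
    push_cast
    linarith
  · obtain h | h | h := hX.inner_mem (c i) (hcX i) x hx h <;>
      (rw [hd] at h; push_cast; linarith [Set.mem_singleton_iff.mp h])

open Classical in
theorem exists_common_inner (hX : IsTriangularConfig X) (hc : IsRegularSimplex c)
    (hcX : ∀ i, c i ∈ X) (hij : i ≠ j) :
    ∃ x ∈ X, x ∉ Set.range c ∧ ⟪c i, x⟫ = -1 / 10 ∧ ⟪c j, x⟫ = -1 / 10 := by
  let v (m : Fin 11) : X := ⟨c m, hcX m⟩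
  let N (m : Fin 11) : Finset X := (innerGraph X (-1 / 10)).neighborFinset (v m)
  have mem_N {m : Fin 11} {x : X} : x ∈ N m ↔ v m ≠ x ∧ ⟪c m, x⟫ = -1 / 10 :=
    SimpleGraph.mem_neighborFinset _ _ _
  have hadj : (innerGraph X (-1 / 10)).Adj (v i) (v j) := by
    refine ⟨fun h => hc.injective.ne hij (congrArg Subtype.val h), ?_⟩
    rw [hc.inner_of_ne i j hij, hX.finrank_eq]
    norm_num
  have hcard : #(({i, j}ᶜ : Finset (Fin 11)).image v) < #(N i ∩ N j) := by
    rw [card_neighborFinset_inter_of_adj hX.isSRGWith hadj]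
    refine card_image_le.trans_lt ?_
    rw [card_compl, card_pair hij, Fintype.card_fin]
    norm_num
  obtain ⟨x, hx, hxc⟩ := exists_mem_notMem_of_card_lt_card hcard
  rw [mem_inter, mem_N, mem_N] at hx
  refine ⟨x, x.2, ?_, hx.1.2, hx.2.2⟩
  rintro ⟨m, hm⟩
  obtain rfl : v m = x := Subtype.ext hm
  refine hxc (mem_image_of_mem v ?_)
  rw [mem_compl, mem_insert, mem_singleton]
  rintro (rfl | rfl)
  exacts [hx.1.1 rfl, hx.2.1 rfl]

theorem isSimplexCode (hX : IsTriangularConfig X) (hc : IsRegularSimplex c) (hcX : ∀ i, c i ∈ X) :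
    IsSimplexCode (innerCode X c) where
  le_two := by
    rintro p ⟨x, hx, hp⟩ m
    exact hX.digit_le_two hcX hx (hp m)
  sum_eq := by
    rintro p ⟨x, -, hp⟩
    exact hc.sum_digits hp
  dotProduct_self := by
    rintro p ⟨x, hx, hp⟩
    have h := hc.dotProduct_digits hp hp
    rw [hX.inner_self hx] at h
    rw [← Nat.cast_inj (R := ℝ), h]
    norm_num
  dotProduct_mem := by
    rintro p ⟨x, hx, hp⟩ q ⟨y, hy, hq⟩
    have h := hc.dotProduct_digits hp hq
    have hinner : ⟪x, y⟫ ∈ ({1, 4 / 15, -1 / 10, -7 / 15} : Set ℝ) := by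
      by_cases hxy : x = y
      · exact .inl (hxy ▸ hX.inner_self hx)
      · exact .inr (hX.inner_mem x hx y hy hxy)
    simp only [mem_insert, mem_singleton, ← Nat.cast_inj (R := ℝ), h]
    rw [Set.mem_insert_iff, Set.mem_insert_iff, Set.mem_insert_iff, Set.mem_singleton_iff] at hinner
    obtain h | h | h | h := hinner <;> norm_num [h]
  exists_eq_one i j hij := by
    obtain ⟨x, hx, hxc, hi, hj⟩ := hX.exists_common_inner hc hcX hij
    obtain ⟨p, hp⟩ := hX.exists_digits hcX hx hxc
    refine ⟨p, ⟨x, hx, hp⟩, ?_, ?_⟩ <;> rw [← Nat.cast_inj (R := ℝ)]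
    · push_cast
      linarith [hp i]
    · push_cast
      linarith [hp j]

end IsTriangularConfig

theorem wConfig_unique_general {E' : Type*} [NormedAddCommGroup E'] [InnerProductSpace ℝ E']
    {X : Set E} {X' : Set E'} [Fintype X] [Fintype X'] (hX : IsTriangularConfig X)
    (hX' : IsTriangularConfig X') : ∃ f : E ≃ₗᵢ[ℝ] E', f '' X = X' := by
  obtain ⟨c, hc, hcX⟩ := hX.exists_isRegularSimplex
  obtain ⟨c', hc', hcX'⟩ := hX'.exists_isRegularSimplex
  have := hc.finiteDimensional
  have := hc'.finiteDimensional
  obtain ⟨σ, hσ⟩ :=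
    (hX.isSimplexCode hc hcX).exists_perm_image_eq (hX'.isSimplexCode hc' hcX')
  obtain ⟨f, hf⟩ := exists_linearIsometryEquiv_of_inner_eq (hc.comp_equiv σ).span_eq_top
    hc'.span_eq_top ((hc.comp_equiv σ).inner_eq_inner hc')
  refine ⟨f, Set.eq_of_subset_of_ncard_le ?_ ?_⟩
  · rintro _ ⟨x, hx, rfl⟩
    by_cases hxc : x ∈ Set.range c
    · obtain ⟨m, rfl⟩ := hxc
      simpa [← hf] using hcX' (σ.symm m)
    · obtain ⟨p, hp⟩ := hX.exists_digits hcX hx hxc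
      obtain ⟨y, hy, hpy⟩ : p ∘ σ ∈ innerCode X' c' := hσ ▸ ⟨p, ⟨x, hx, hp⟩, rfl⟩
      have hfx : f x = y := ext_inner_of_span_eq_top hc'.span_eq_top fun m => by
        rw [hpy, ← hf, f.inner_map_map]
        exact hp (σ m)
      exact hfx ▸ hy
  · rw [Set.ncard_image_of_injective _ f.injective, hX.ncard_eq, hX'.ncard_eq]

end Configuration

theorem card_coe_eq_ncard_image_val {α : Type*} {X : Set α} (s : Set X) [Fintype s] :
    Fintype.card s = (Subtype.val '' s).ncard := by
  rw [Set.ncard_image_of_injective _ Subtype.val_injective, Set.ncard_eq_toFinset_card',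
    Set.toFinset_card]

namespace IsWConfig

variable {X : Set (EuclideanSpace ℝ (Fin 10))}

theorem finite (hX : IsWConfig X) : X.Finite :=
  Set.finite_of_ncard_ne_zero (hX.1 ▸ by norm_num)

theorem isTriangularConfig [Fintype X] (hX : IsWConfig X) : IsTriangularConfig X := by
  classical
  obtain ⟨hcard, hnorm, hinner, hdegree, hp⟩ := hX
  have adj_iff {u v : X} : (innerGraph X (-1 / 10)).Adj u v ↔ ⟪u.1, v.1⟫ = α2 :=
    innerGraph_adj_iff hnorm (by norm_num)
  have hcommon (u v : X) (huv : u ≠ v) (k : Fin 3) (hk : ⟪u.1, v.1⟫ = wAngle k) :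
      Fintype.card ((innerGraph X (-1 / 10)).commonNeighbors u v) = wP k 1 1 := by
    rw [card_coe_eq_ncard_image_val, ← hp u u.2 v v.2 (Subtype.coe_ne_coe.mpr huv) k 1 1 hk]
    congr 1
    ext w
    simp [SimpleGraph.mem_commonNeighbors, adj_iff, wAngle, real_inner_comm w v.1, and_comm,
      and_left_comm, and_assoc]
  refine ⟨finrank_euclideanSpace_fin, hnorm, hinner, ?_, fun u => ?_, fun u v h => ?_,
    fun u v huv h => ?_⟩
  · rw [← Set.toFinset_card, ← Set.ncard_eq_toFinset_card', hcard]
  · rw [← SimpleGraph.card_neighborSet_eq_degree, card_coe_eq_ncard_image_val,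
      ← (hdegree u u.2).2.1]
    congr 1
    ext w
    simp [adj_iff, and_comm]
  · exact hcommon u v h.1 1 h.2
  · obtain h' | h' | h' := hinner u u.2 v v.2 (Subtype.coe_ne_coe.mpr huv)
    · exact hcommon u v huv 0 h'
    · exact absurd (adj_iff.mpr h') h
    · exact hcommon u v huv 2 h'

end IsWConfig

/-- Any two `W`-configurations in ℝ^10 are related by an orthogonal
transformation: there is a linear isometric equivalence of
`EuclideanSpace ℝ (Fin 10)` carrying one onto the other. -/
theorem wConfig_unique (X X' : Set (EuclideanSpace ℝ (Fin 10)))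
    (hX : IsWConfig X) (hX' : IsWConfig X') :
    ∃ f : EuclideanSpace ℝ (Fin 10) ≃ₗᵢ[ℝ] EuclideanSpace ℝ (Fin 10),
      f '' X = X' :=
  have := hX.finite.fintype
  have := hX'.finite.fintype
  wConfig_unique_general hX.isTriangularConfig hX'.isTriangularConfig
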